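/- arXiv:1904.00272 — 2 statements merged into one kernel-verified Lean document; each statement's English description precedes it below -/
import Mathlib

section
/- Under the assumptions (i) |∏_{i=0}^{m} β(k+i)| ≤ M |∏_{i=0}^{m} β(j+i)| for all k ≤ j and all m ≥ 0, (ii) |β(k)| ≥ c(1+k) for all k with c > 0, and (iii) Σ_{k=0}^∞ Σ_{j=0}^∞ (max(j,k)+1)^{−2} |μ(j)/μ(k)|² w(k)/w'(j) < ∞, the Hilbert–Schmidt norms of the operators Q_n tend to zero: ‖Q_n‖²_HS ≤ (M²/c²) Σ_{k=0}^∞ Σ_{j=k}^∞ (1+j+n)^{−2} |μ(j)/μ(k)|² w(k)/w'(j) → 0 as n → ∞. -/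
/-- The integral kernel of the operator `Q_n`:
`K_n(k,j) = (∏_{i=0}^{n-1} β(k+i)) / (∏_{i=0}^{n} β(j+i)) · (μ(j)/μ(k))`. -/
noncomputable def Qker (β μ : ℕ → ℂ) (n : ℕ) (k j : ℕ) : ℂ :=
  (∏ i ∈ Finset.range n, β (k + i)) / (∏ i ∈ Finset.range (n + 1), β (j + i)) *
    (μ j / μ k)

/-- The Hilbert–Schmidt summand of `Q_n : ℓ²_{w'} → ℓ²_w` at `(k,j)` (zero off the
region `j ≥ k` where the kernel is supported). -/
noncomputable def HSterm (w w' : ℕ → ℝ) (β μ : ℕ → ℂ) (n : ℕ) (p : ℕ × ℕ) : ℝ :=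
  if p.1 ≤ p.2 then ‖Qker β μ n p.1 p.2‖ ^ 2 * (w p.1 / w' p.2) else 0

/-- The comparison summand `(1+j+n)^{-2} |μ(j)/μ(k)|² w(k)/w'(j)` on `j ≥ k`. -/
noncomputable def Bterm (w w' : ℕ → ℝ) (μ : ℕ → ℂ) (n : ℕ) (p : ℕ × ℕ) : ℝ :=
  if p.1 ≤ p.2 then ((1 + p.2 + n : ℝ))⁻¹ ^ 2 * ‖μ p.2 / μ p.1‖ ^ 2 * (w p.1 / w' p.2)
  else 0

theorem norm_Qker_le {β μ : ℕ → ℂ} (hβ : ∀ k, β k ≠ 0) {M c : ℝ} (hc : 0 < c)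
    (hM : ∀ k j m : ℕ, k ≤ j →
      ‖∏ i ∈ Finset.range (m + 1), β (k + i)‖ ≤
        M * ‖∏ i ∈ Finset.range (m + 1), β (j + i)‖)
    (hβlow : ∀ k : ℕ, c * (1 + k) ≤ ‖β k‖) (n : ℕ) {k j : ℕ} (hkj : k ≤ j) :
    ‖Qker β μ n k j‖ ≤ M / c * (1 + j + n : ℝ)⁻¹ * ‖μ j / μ k‖ := by
  have hM1 : 1 ≤ M := by
    have h := hM 0 0 0 le_rfl
    have h0 : 0 < ‖β 0‖ := norm_pos_iff.mpr (hβ 0)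
    simp only [zero_add, Finset.range_one, Finset.prod_singleton] at h
    nlinarith
  have hprod : ‖∏ i ∈ Finset.range n, β (k + i)‖ ≤
      M * ‖∏ i ∈ Finset.range n, β (j + i)‖ := by
    cases n with
    | zero => simpa using hM1
    | succ m => exact hM k j m hkj
  have hpos : 0 < ‖∏ i ∈ Finset.range n, β (j + i)‖ :=
    norm_pos_iff.mpr (Finset.prod_ne_zero_iff.mpr fun i _ => hβ _)
  have hlow : c * (1 + j + n) ≤ ‖β (j + n)‖ := by
    have h := hβlow (j + n)
    push_cast at h
    linarith
  have hden : 0 < c * (1 + j + n : ℝ) := by positivity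
  rw [Qker, norm_mul]
  refine mul_le_mul_of_nonneg_right ?_ (norm_nonneg _)
  rw [norm_div, Finset.prod_range_succ, norm_mul]
  calc _ ≤ M * ‖∏ i ∈ Finset.range n, β (j + i)‖ /
        (‖∏ i ∈ Finset.range n, β (j + i)‖ * (c * (1 + j + n))) := by gcongr
    _ = M / c * (1 + j + n : ℝ)⁻¹ := by field_simp

theorem HSterm_nonneg {w w' : ℕ → ℝ} (hw : ∀ k, 0 < w k) (hw' : ∀ k, 0 < w' k)
    (β μ : ℕ → ℂ) (n : ℕ) (p : ℕ × ℕ) : 0 ≤ HSterm w w' β μ n p := by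
  have h := div_pos (hw p.1) (hw' p.2)
  unfold HSterm
  split_ifs <;> positivity

theorem Bterm_nonneg {w w' : ℕ → ℝ} (hw : ∀ k, 0 < w k) (hw' : ∀ k, 0 < w' k)
    (μ : ℕ → ℂ) (n : ℕ) (p : ℕ × ℕ) : 0 ≤ Bterm w w' μ n p := by
  have h := div_pos (hw p.1) (hw' p.2)
  unfold Bterm
  split_ifs <;> positivity

theorem HSterm_le {w w' : ℕ → ℝ} (hw : ∀ k, 0 < w k) (hw' : ∀ k, 0 < w' k)
    {β μ : ℕ → ℂ} (hβ : ∀ k, β k ≠ 0) {M c : ℝ} (hc : 0 < c)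
    (hM : ∀ k j m : ℕ, k ≤ j →
      ‖∏ i ∈ Finset.range (m + 1), β (k + i)‖ ≤
        M * ‖∏ i ∈ Finset.range (m + 1), β (j + i)‖)
    (hβlow : ∀ k : ℕ, c * (1 + k) ≤ ‖β k‖) (n : ℕ) (p : ℕ × ℕ) :
    HSterm w w' β μ n p ≤ M ^ 2 / c ^ 2 * Bterm w w' μ n p := by
  have h := div_pos (hw p.1) (hw' p.2)
  unfold HSterm Bterm
  split_ifs with hp
  · calc _ ≤ (M / c * (1 + p.2 + n : ℝ)⁻¹ * ‖μ p.2 / μ p.1‖) ^ 2 * (w p.1 / w' p.2) := by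
          gcongr
          exact norm_Qker_le hβ hc hM hβlow n hp
      _ = _ := by ring
  · simp

theorem Bterm_le {w w' : ℕ → ℝ} (hw : ∀ k, 0 < w k) (hw' : ∀ k, 0 < w' k)
    (μ : ℕ → ℂ) (n : ℕ) (p : ℕ × ℕ) :
    Bterm w w' μ n p ≤
      ((max p.2 p.1 : ℝ) + 1)⁻¹ ^ 2 * ‖μ p.2 / μ p.1‖ ^ 2 * (w p.1 / w' p.2) := by
  have h := div_pos (hw p.1) (hw' p.2)
  unfold Bterm
  split_ifs with hp
  · have hp' : (p.1 : ℝ) ≤ p.2 := by exact_mod_cast hp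
    rw [max_eq_left hp']
    gcongr ?_ ^ 2 * _ * _
    apply inv_anti₀ (by positivity)
    have : (0 : ℝ) ≤ n := n.cast_nonneg
    linarith
  · positivity

theorem tendsto_Bterm (w w' : ℕ → ℝ) (μ : ℕ → ℂ) (p : ℕ × ℕ) :
    Filter.Tendsto (fun n : ℕ => Bterm w w' μ n p) Filter.atTop (nhds 0) := by
  unfold Bterm
  split_ifs
  · have h : Filter.Tendsto (fun n : ℕ => (1 + p.2 + n : ℝ)⁻¹) Filter.atTop (nhds 0) :=
      (Filter.tendsto_atTop_add_const_left _ _ tendsto_natCast_atTop_atTop).inv_tendsto_atTop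
    simpa using ((h.pow 2).mul_const (‖μ p.2 / μ p.1‖ ^ 2)).mul_const (w p.1 / w' p.2)
  · exact tendsto_const_nhds

/-- under the same hypotheses (i)–(iii), the Hilbert–Schmidt norms of
the operators `Q_n` satisfy the bound
`‖Q_n‖²_HS ≤ (M²/c²) Σ_k Σ_{j≥k} (1+j+n)^{-2} |μ(j)/μ(k)|² w(k)/w'(j)`
and tend to zero as `n → ∞`. -/
theorem statement3 (w w' : ℕ → ℝ) (hw : ∀ k, 0 < w k) (hw' : ∀ k, 0 < w' k)
    (β μ : ℕ → ℂ) (hβ : ∀ k, β k ≠ 0) (hμ : ∀ k, μ k ≠ 0) (hμ0 : μ 0 = 1)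
    (M c : ℝ) (hc : 0 < c)
    (hM : ∀ k j m : ℕ, k ≤ j →
      ‖∏ i ∈ Finset.range (m + 1), β (k + i)‖ ≤
        M * ‖∏ i ∈ Finset.range (m + 1), β (j + i)‖)
    (hβlow : ∀ k : ℕ, c * (1 + k) ≤ ‖β k‖)
    (hsum : Summable fun p : ℕ × ℕ =>
      ((max p.2 p.1 : ℝ) + 1)⁻¹ ^ 2 * ‖μ p.2 / μ p.1‖ ^ 2 * (w p.1 / w' p.2)) :
    (∀ n : ℕ, ∑' p : ℕ × ℕ, HSterm w w' β μ n p ≤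
        (M ^ 2 / c ^ 2) * ∑' p : ℕ × ℕ, Bterm w w' μ n p) ∧
      Filter.Tendsto (fun n : ℕ => ∑' p : ℕ × ℕ, HSterm w w' β μ n p)
        Filter.atTop (nhds 0) := by
  have hB (n : ℕ) : Summable (Bterm w w' μ n) :=
    hsum.of_nonneg_of_le (Bterm_nonneg hw hw' μ n) (Bterm_le hw hw' μ n)
  have hle (n : ℕ) := HSterm_le (μ := μ) hw hw' hβ hc hM hβlow n
  have hbound (n : ℕ) : ∑' p : ℕ × ℕ, HSterm w w' β μ n p ≤
      (M ^ 2 / c ^ 2) * ∑' p : ℕ × ℕ, Bterm w w' μ n p := by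
    have hS := (hB n).mul_left (M ^ 2 / c ^ 2)
    rw [← tsum_mul_left]
    exact (hS.of_nonneg_of_le (HSterm_nonneg hw hw' β μ n) (hle n)).tsum_le_tsum (hle n) hS
  have hlim : Filter.Tendsto (fun n : ℕ => ∑' p : ℕ × ℕ, Bterm w w' μ n p)
      Filter.atTop (nhds 0) := by
    have h := tendsto_tsum_of_dominated_convergence hsum (tendsto_Bterm w w' μ)
      (Filter.Eventually.of_forall fun n p => by
        rw [Real.norm_of_nonneg (Bterm_nonneg hw hw' μ n p)]
        exact Bterm_le hw hw' μ n p)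
    simpa using h
  exact ⟨hbound, squeeze_zero (fun n => tsum_nonneg (HSterm_nonneg hw hw' β μ n)) hbound
    (by simpa using hlim.const_mul (M ^ 2 / c ^ 2))⟩
end

section
/- Let n ≥ 1, assume the hypotheses under which Q̃_n : ℓ²_{w'} → ℓ²_w is Hilbert–Schmidt and D_n Q̃_n = I, and assume h^{(n)} ∈ ℓ²_w. Define Q_n g = Q̃_n g − ((Q̃_n g)(0)/∏_{i=0}^{n−1} β(i)) · h^{(n)} and C_n f = (f(0)/∏_{i=0}^{n−1} β(i)) · h^{(n)}. Then Q_n : ℓ²_{w'} → ℓ²_w is a Hilbert–Schmidt operator satisfying D_n Q_n g = g for all g ∈ ℓ²_{w'} and Q_n D_n f = f − C_n f for all f ∈ dom(D_n), where C_n is a rank-one Hilbert–Schmidt operator on ℓ²_w; hence Q_n is a compact parametrix for D_n. -/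
/-- The difference operator `D_n` on sequences. -/
noncomputable def Dn (β μ : ℕ → ℂ) (n : ℕ) (f : ℕ → ℂ) (k : ℕ) : ℂ :=
  β (k + n) * f k - β k * (μ (k + 1) / μ k) * f (k + 1)

/-- The formal kernel vector `h^{(n)}(k) = (∏_{i=0}^{n-1} β(k+i)) / μ(k)`. -/
noncomputable def hker (β μ : ℕ → ℂ) (n : ℕ) (k : ℕ) : ℂ :=
  (∏ i ∈ Finset.range n, β (k + i)) / μ k

/-- The operator `Q̃_n`: `(Q̃_n g)(k) = Σ_{j=k}^∞ K_n(k,j) g(j)`. -/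
noncomputable def Qtilde (β μ : ℕ → ℂ) (n : ℕ) (g : ℕ → ℂ) (k : ℕ) : ℂ :=
  ∑' j : ℕ, if k ≤ j then Qker β μ n k j * g j else 0

/-- The corrected parametrix `Q_n g = Q̃_n g − ((Q̃_n g)(0)/∏_{i<n} β(i)) h^{(n)}`. -/
noncomputable def Qcorr (β μ : ℕ → ℂ) (n : ℕ) (g : ℕ → ℂ) (k : ℕ) : ℂ :=
  Qtilde β μ n g k - Qtilde β μ n g 0 / (∏ i ∈ Finset.range n, β i) * hker β μ n k

/-- The rank-one operator `C_n f = (f(0)/∏_{i<n} β(i)) h^{(n)}`. -/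
noncomputable def Cop (β μ : ℕ → ℂ) (n : ℕ) (f : ℕ → ℂ) (k : ℕ) : ℂ :=
  f 0 / (∏ i ∈ Finset.range n, β i) * hker β μ n k

/-- The integral kernel of the corrected parametrix `Q_n`. -/
noncomputable def Qcorrker (β μ : ℕ → ℂ) (n : ℕ) (k j : ℕ) : ℂ :=
  (if k ≤ j then Qker β μ n k j else 0) -
    Qker β μ n 0 j / (∏ i ∈ Finset.range n, β i) * hker β μ n k

/-- Membership in the weighted space `ℓ²_w`: `Σ_k w(k) |f(k)|² < ∞`. -/
def MemL2 (w : ℕ → ℝ) (f : ℕ → ℂ) : Prop :=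
  Summable fun k => w k * ‖f k‖ ^ 2

/-- The factor `a(j) = μ(j) / ∏_{i=0}^{n} β(j+i)` of the kernel `Qker k j = hker k * a(j)`. -/
noncomputable def cokernelFactor (β μ : ℕ → ℂ) (n j : ℕ) : ℂ :=
  μ j / ∏ i ∈ Finset.range (n + 1), β (j + i)

lemma Qker_eq_hker_mul (β μ : ℕ → ℂ) (n k j : ℕ) :
    Qker β μ n k j = hker β μ n k * cokernelFactor β μ n j := by
  unfold Qker hker cokernelFactor
  ring

lemma hker_zero {β μ : ℕ → ℂ} (hμ0 : μ 0 = 1) (n : ℕ) :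
    hker β μ n 0 = ∏ i ∈ Finset.range n, β i := by
  simp [hker, hμ0]

lemma hker_ne_zero {β μ : ℕ → ℂ} (hβ : ∀ k, β k ≠ 0) (hμ : ∀ k, μ k ≠ 0) (n k : ℕ) :
    hker β μ n k ≠ 0 :=
  div_ne_zero (Finset.prod_ne_zero_iff.2 fun _ _ => hβ _) (hμ k)

lemma mul_hker_mul_cokernelFactor {β μ : ℕ → ℂ} (hβ : ∀ k, β k ≠ 0) (hμ : ∀ k, μ k ≠ 0)
    (n k : ℕ) : β (k + n) * hker β μ n k * cokernelFactor β μ n k = 1 := by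
  have hp : ∏ i ∈ Finset.range n, β (k + i) ≠ 0 := Finset.prod_ne_zero_iff.2 fun _ _ => hβ _
  have h1 := hβ (k + n)
  have h2 := hμ k
  rw [hker, cokernelFactor, Finset.prod_range_succ]
  field_simp

lemma hker_succ {β μ : ℕ → ℂ} (hμ : ∀ k, μ k ≠ 0) (n k : ℕ) :
    β k * (μ (k + 1) / μ k) * hker β μ n (k + 1) = β (k + n) * hker β μ n k := by
  have hprod : β k * ∏ i ∈ Finset.range n, β (k + 1 + i) =
      (∏ i ∈ Finset.range n, β (k + i)) * β (k + n) := by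
    rw [← Finset.prod_range_succ (fun i => β (k + i)), Finset.prod_range_succ', mul_comm]
    simp only [add_zero, add_assoc, add_comm 1]
  have h1 := hμ k
  have h2 := hμ (k + 1)
  unfold hker
  field_simp
  linear_combination hprod

/-- `D_n` acts on `h^{(n)} u` as a weighted forward difference of `u`. -/
lemma Dn_hker_mul {β μ : ℕ → ℂ} (hμ : ∀ k, μ k ≠ 0) (n : ℕ) (u : ℕ → ℂ) (k : ℕ) :
    Dn β μ n (fun k => hker β μ n k * u k) k =
      β (k + n) * hker β μ n k * (u k - u (k + 1)) := by
  unfold Dn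
  linear_combination (-u (k + 1)) * hker_succ (β := β) hμ n k

lemma Qcorrker_eq_ite {β μ : ℕ → ℂ} (hβ : ∀ k, β k ≠ 0) (hμ : ∀ k, μ k ≠ 0) (hμ0 : μ 0 = 1)
    (n k j : ℕ) : Qcorrker β μ n k j =
      if k ≤ j then 0 else -(hker β μ n k * cokernelFactor β μ n j) := by
  have h0 := hker_ne_zero hβ hμ n 0
  rw [Qcorrker, Qker_eq_hker_mul, Qker_eq_hker_mul, ← hker_zero hμ0 (β := β) n,
    mul_div_cancel_left₀ _ h0]
  split_ifs <;> ring

/-- The tails of the series defining `Q̃_n` cancel, so that `Q_n` is given by finite sums. -/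
lemma Qcorr_eq_sum {β μ : ℕ → ℂ} (hβ : ∀ k, β k ≠ 0) (hμ : ∀ k, μ k ≠ 0) (hμ0 : μ 0 = 1)
    {n : ℕ} {g : ℕ → ℂ} (hs : Summable fun j => cokernelFactor β μ n j * g j) (k : ℕ) :
    Qcorr β μ n g k =
      hker β μ n k * -∑ j ∈ Finset.range k, cokernelFactor β μ n j * g j := by
  have hQ (m : ℕ) : Qtilde β μ n g m = hker β μ n m *
      ((∑' j, cokernelFactor β μ n j * g j) -
        ∑ j ∈ Finset.range m, cokernelFactor β μ n j * g j) := by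
    have hfin : (∑' j, if j < m then cokernelFactor β μ n j * g j else 0) =
        ∑ j ∈ Finset.range m, cokernelFactor β μ n j * g j := by
      rw [tsum_eq_sum (s := Finset.range m)]
      · exact Finset.sum_congr rfl fun j hj => if_pos (Finset.mem_range.1 hj)
      · exact fun j hj => if_neg (by simpa using hj)
    have hfs : Summable fun j => if j < m then cokernelFactor β μ n j * g j else 0 :=
      summable_of_ne_finset_zero (s := Finset.range m) fun j hj => if_neg (by simpa using hj)
    rw [← hfin, ← hs.tsum_sub hfs, ← tsum_mul_left, Qtilde]
    refine tsum_congr fun j => ?_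
    rw [Qker_eq_hker_mul]
    by_cases h : m ≤ j
    · simp [h, not_lt.2 h, mul_assoc]
    · simp [h, not_le.1 h]
  have h0 := hker_ne_zero hβ hμ n 0
  rw [Qcorr, hQ k, hQ 0, ← hker_zero hμ0 (β := β) n, mul_div_cancel_left₀ _ h0]
  simp only [Finset.range_zero, Finset.sum_empty]
  ring

lemma summable_cokernelFactor_sq {w w' : ℕ → ℝ} (hw : ∀ k, 0 < w k) (hw' : ∀ k, 0 < w' k)
    {β μ : ℕ → ℂ} (hβ : ∀ k, β k ≠ 0) (hμ0 : μ 0 = 1) {M c : ℝ} (hc : 0 < c)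
    (hM : ∀ k j m : ℕ, k ≤ j →
      ‖∏ i ∈ Finset.range (m + 1), β (k + i)‖ ≤
        M * ‖∏ i ∈ Finset.range (m + 1), β (j + i)‖)
    (hβlow : ∀ k : ℕ, c * (1 + k) ≤ ‖β k‖)
    (hsum : Summable fun p : ℕ × ℕ =>
      ((max p.2 p.1 : ℝ) + 1)⁻¹ ^ 2 * ‖μ p.2 / μ p.1‖ ^ 2 * (w p.1 / w' p.2))
    {n : ℕ} (hn : 1 ≤ n) :
    Summable fun j => ‖cokernelFactor β μ n j‖ ^ 2 / w' j := by
  obtain ⟨m, rfl⟩ : ∃ m, n = m + 1 := ⟨n - 1, by omega⟩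
  have hrow : Summable fun j : ℕ => ((j : ℝ) + 1)⁻¹ ^ 2 * ‖μ j‖ ^ 2 * (w 0 / w' j) := by
    have := hsum.comp_injective (Prod.mk_right_injective (0 : ℕ))
    refine this.congr fun j => ?_
    simp [hμ0]
  set P : ℝ := ‖∏ i ∈ Finset.range (m + 1), β (0 + i)‖ with hP
  have hP0 : 0 < P := norm_pos_iff.2 (Finset.prod_ne_zero_iff.2 fun _ _ => hβ _)
  have hbound (j : ℕ) : ‖cokernelFactor β μ (m + 1) j‖ ≤
      M / (P * c) * (((j : ℝ) + 1)⁻¹ * ‖μ j‖) := by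
    have hprod := hM 0 j m (Nat.zero_le j)
    rw [← hP] at hprod
    set R : ℝ := ‖∏ i ∈ Finset.range (m + 1), β (j + i)‖ with hR
    have hR0 : 0 < R := norm_pos_iff.2 (Finset.prod_ne_zero_iff.2 fun _ _ => hβ _)
    have hlow : c * ((j : ℝ) + 1) ≤ ‖β (j + (m + 1))‖ := by
      refine le_trans ?_ (hβlow (j + (m + 1)))
      push_cast
      have : (0 : ℝ) ≤ m := m.cast_nonneg
      nlinarith
    have hj : (0 : ℝ) < (j : ℝ) + 1 := by positivity
    have hden : P * (c * ((j : ℝ) + 1)) ≤ M * (R * ‖β (j + (m + 1))‖) := by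
      rw [← mul_assoc M]
      exact mul_le_mul hprod hlow (by positivity) (hP0.le.trans hprod)
    have hβ0 : 0 < ‖β (j + (m + 1))‖ := norm_pos_iff.2 (hβ _)
    rw [cokernelFactor, Finset.prod_range_succ, norm_div, norm_mul, ← hR,
      div_le_iff₀ (by positivity)]
    calc ‖μ j‖ = ‖μ j‖ * ((P * (c * ((j : ℝ) + 1))) / (P * (c * ((j : ℝ) + 1)))) := by
          rw [div_self (by positivity), mul_one]
      _ ≤ ‖μ j‖ * ((M * (R * ‖β (j + (m + 1))‖)) / (P * (c * ((j : ℝ) + 1)))) := by gcongr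
      _ = _ := by field_simp
  refine Summable.of_nonneg_of_le (fun j => div_nonneg (sq_nonneg _) (hw' j).le) (fun j => ?_)
    (hrow.mul_left ((M / (P * c)) ^ 2 / w 0))
  have h0 := hw 0
  have hj := hw' j
  calc ‖cokernelFactor β μ (m + 1) j‖ ^ 2 / w' j
      ≤ (M / (P * c) * (((j : ℝ) + 1)⁻¹ * ‖μ j‖)) ^ 2 / w' j := by
        gcongr
        exact hbound j
    _ = _ := by field_simp

/-- The pairing between `ℓ²_{1/v}` and `ℓ²_v` converges absolutely. -/
lemma MemL2.summable_norm_mul {v : ℕ → ℝ} (hv : ∀ k, 0 < v k) {a g : ℕ → ℂ}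
    (ha : Summable fun j => ‖a j‖ ^ 2 / v j) (hg : MemL2 v g) :
    Summable fun j => ‖a j * g j‖ := by
  refine Summable.of_nonneg_of_le (fun j => norm_nonneg _) (fun j => ?_) (ha.add hg)
  have hj := hv j
  rw [norm_mul, div_add' _ _ _ hj.ne', le_div_iff₀ hj]
  nlinarith [sq_nonneg (‖a j‖ - v j * ‖g j‖), sq_nonneg (‖a j‖ + v j * ‖g j‖), sq_nonneg ‖a j‖,
    mul_nonneg (mul_nonneg hj.le (norm_nonneg (a j))) (norm_nonneg (g j))]

lemma MemL2.mul_of_norm_le {v : ℕ → ℝ} (hv : ∀ k, 0 < v k) {h u : ℕ → ℂ} {B : ℝ}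
    (hh : MemL2 v h) (hu : ∀ k, ‖u k‖ ≤ B) : MemL2 v fun k => h k * u k := by
  refine Summable.of_nonneg_of_le (fun k => mul_nonneg (hv k).le (sq_nonneg _)) (fun k => ?_)
    (Summable.mul_left (B ^ 2) hh)
  have hk := hv k
  calc v k * ‖h k * u k‖ ^ 2 = ‖u k‖ ^ 2 * (v k * ‖h k‖ ^ 2) := by
        rw [norm_mul]
        ring
    _ ≤ B ^ 2 * (v k * ‖h k‖ ^ 2) := by
        gcongr
        exact hu k

/-- for `n ≥ 1`, under the hypotheses making `Q̃_n` Hilbert–Schmidt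
with `D_n Q̃_n = I`, and assuming `h^{(n)} ∈ ℓ²_w`, the corrected operator
`Q_n g = Q̃_n g − ((Q̃_n g)(0)/∏_{i<n} β(i)) h^{(n)}` is a Hilbert–Schmidt operator
`ℓ²_{w'} → ℓ²_w` satisfying `D_n Q_n g = g` for all `g ∈ ℓ²_{w'}` and
`Q_n D_n f = f − C_n f` for all `f ∈ dom(D_n)`, where `C_n f = (f(0)/∏ β) h^{(n)}`
is a rank-one Hilbert–Schmidt operator on `ℓ²_w`; hence `Q_n` is a compact
parametrix for `D_n`. -/
theorem statement8 (w w' : ℕ → ℝ) (hw : ∀ k, 0 < w k) (hw' : ∀ k, 0 < w' k)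
    (β μ : ℕ → ℂ) (hβ : ∀ k, β k ≠ 0) (hμ : ∀ k, μ k ≠ 0) (hμ0 : μ 0 = 1)
    (M c : ℝ) (hc : 0 < c)
    (hM : ∀ k j m : ℕ, k ≤ j →
      ‖∏ i ∈ Finset.range (m + 1), β (k + i)‖ ≤
        M * ‖∏ i ∈ Finset.range (m + 1), β (j + i)‖)
    (hβlow : ∀ k : ℕ, c * (1 + k) ≤ ‖β k‖)
    (hsum : Summable fun p : ℕ × ℕ =>
      ((max p.2 p.1 : ℝ) + 1)⁻¹ ^ 2 * ‖μ p.2 / μ p.1‖ ^ 2 * (w p.1 / w' p.2))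
    (n : ℕ) (hn : 1 ≤ n) (hh : MemL2 w (hker β μ n)) :
    -- `Q_n` is Hilbert–Schmidt from `ℓ²_{w'}` to `ℓ²_w`:
    (Summable fun p : ℕ × ℕ => ‖Qcorrker β μ n p.1 p.2‖ ^ 2 * (w p.1 / w' p.2)) ∧
    -- `D_n Q_n = I` on `ℓ²_{w'}`:
    (∀ g : ℕ → ℂ, MemL2 w' g →
      MemL2 w (Qcorr β μ n g) ∧ ∀ k : ℕ, Dn β μ n (Qcorr β μ n g) k = g k) ∧
    -- `Q_n D_n = I − C_n` on the maximal domain: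
    (∀ f : ℕ → ℂ, MemL2 w f → MemL2 w' (Dn β μ n f) →
      ∀ k : ℕ, Qcorr β μ n (Dn β μ n f) k = f k - Cop β μ n f k) ∧
    -- `C_n` is a rank-one operator on `ℓ²_w` (with Hilbert–Schmidt kernel):
    (∀ f : ℕ → ℂ, ∃ t : ℂ, Cop β μ n f = t • hker β μ n) ∧
    (∀ f : ℕ → ℂ, MemL2 w f → MemL2 w (Cop β μ n f)) ∧
    (Summable fun k : ℕ =>
      w k * ‖hker β μ n k / (∏ i ∈ Finset.range n, β i)‖ ^ 2 / w 0) := by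
  have hA := summable_cokernelFactor_sq hw hw' hβ hμ0 hc hM hβlow hsum hn
  have hscalar (t : ℂ) : MemL2 w fun k => hker β μ n k * t :=
    hh.mul_of_norm_le hw (u := fun _ => t) fun _ => le_rfl
  refine ⟨?_, fun g hg => ?_, fun f _ hDf k => ?_, fun f => ⟨_, rfl⟩, fun f _ => ?_, ?_⟩
  · refine Summable.of_nonneg_of_le
      (fun p => mul_nonneg (sq_nonneg _) (div_nonneg (hw p.1).le (hw' p.2).le)) (fun p => ?_)
      (Summable.mul_of_nonneg hh hA (fun k => mul_nonneg (hw k).le (sq_nonneg _))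
        fun j => div_nonneg (sq_nonneg _) (hw' j).le)
    have h1 := hw p.1
    have h2 := hw' p.2
    rw [Qcorrker_eq_ite hβ hμ hμ0]
    split_ifs
    · rw [norm_zero, zero_pow two_ne_zero, zero_mul]
      positivity
    · rw [norm_neg, norm_mul]
      exact le_of_eq (by ring)
  · have hs := MemL2.summable_norm_mul hw' hA hg
    have hQ : Qcorr β μ n g = fun k => hker β μ n k *
        -∑ j ∈ Finset.range k, cokernelFactor β μ n j * g j :=
      funext (Qcorr_eq_sum hβ hμ hμ0 hs.of_norm)
    rw [hQ]
    refine ⟨hh.mul_of_norm_le hw (B := ∑' j, ‖cokernelFactor β μ n j * g j‖) fun k => ?_,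
      fun k => ?_⟩
    · rw [norm_neg]
      exact (norm_sum_le _ _).trans (hs.sum_le_tsum _ fun _ _ => norm_nonneg _)
    · rw [Dn_hker_mul hμ, Finset.sum_range_succ]
      linear_combination g k * mul_hker_mul_cokernelFactor hβ hμ n k
  · have hs := (MemL2.summable_norm_mul hw' hA hDf).of_norm
    have hne := hker_ne_zero hβ hμ n
    set u : ℕ → ℂ := fun j => f j / hker β μ n j with hu
    have hf : f = fun j => hker β μ n j * u j :=
      funext fun j => (mul_div_cancel₀ _ (hne j)).symm
    have hterm (j : ℕ) : cokernelFactor β μ n j * Dn β μ n f j = u j - u (j + 1) := by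
      rw [hf, Dn_hker_mul hμ]
      linear_combination (u j - u (j + 1)) * mul_hker_mul_cokernelFactor hβ hμ n j
    rw [Qcorr_eq_sum hβ hμ hμ0 hs, Finset.sum_congr rfl fun j _ => hterm j,
      Finset.sum_range_sub', Cop, ← hker_zero hμ0 (β := β) n]
    have hk : f k = hker β μ n k * u k := congrFun hf k
    rw [hk]
    simp only [hu]
    ring
  · exact (hscalar (f 0 / ∏ i ∈ Finset.range n, β i)).congr fun k => by
      simp only [Cop, mul_comm]
  · exact ((hscalar (∏ i ∈ Finset.range n, β i)⁻¹).div_const (w 0)).congr fun k => by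
      simp only [div_eq_mul_inv]
end
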